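/- Let 0 ≤ β ≤ γ ≤ 1 with γ > 0 and βγ < 1. Then for all real x > 0, (βx² − γ)·ln((βx + 1)/(x + γ)) ≤ (1 − βγ)·x. -/

import Mathlib

theorem cubic_log_inequality (β γ : ℝ) (hβ : 0 ≤ β) (hβγ : β ≤ γ) (hγ1 : γ ≤ 1)
    (hγ : 0 < γ) (hbg : β * γ < 1) :
    ∀ x : ℝ, 0 < x →
      (β * x ^ 2 - γ) * Real.log ((β * x + 1) / (x + γ)) ≤ (1 - β * γ) * x := by
  intro x hx
  have h1 : 0 < β * x + 1 := by positivity
  have h2 : 0 < x + γ := by positivity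
  have hR : 0 ≤ (1 - β * γ) * x := mul_nonneg (by linarith) hx.le
  rcases le_total γ (β * x ^ 2) with h | h
  · have hx1 : 1 ≤ x := by
      by_contra hc
      push Not at hc
      have : x ^ 2 < 1 := by nlinarith
      nlinarith
    have hle : (β * x + 1) / (x + γ) ≤ 1 := by
      rw [div_le_one h2]
      nlinarith
    have := Real.log_nonpos (by positivity) hle
    nlinarith [mul_nonneg (sub_nonneg.2 h) (neg_nonneg.2 this)]
  · have hlog : Real.log ((β * x + 1) / (x + γ)) = -Real.log ((x + γ) / (β * x + 1)) := by
      rw [← Real.log_inv, inv_div]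
    have hl := Real.log_le_sub_one_of_pos (div_pos h2 h1)
    rw [hlog]
    have key : (γ - β * x ^ 2) * ((x + γ) / (β * x + 1) - 1) ≤ (1 - β * γ) * x := by
      rw [div_sub_one h1.ne', ← mul_div_assoc, div_le_iff₀ h1]
      have hb : (γ - β * x ^ 2) * (x + γ - (β * x + 1)) ≤ (γ - β * x ^ 2) * (x * (1 - β)) :=
        mul_le_mul_of_nonneg_left (by linarith) (by linarith)
      have hc : (γ - β * x ^ 2) * (x * (1 - β)) ≤ γ * (x * (1 - β)) :=
        mul_le_mul_of_nonneg_right (by nlinarith [sq_nonneg x])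
          (mul_nonneg hx.le (by linarith))
      have hd : 0 ≤ (1 - β * γ) * x * (β * x) := mul_nonneg hR (by positivity)
      nlinarith
    have := mul_le_mul_of_nonneg_left hl (sub_nonneg.2 h)
    linarith
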